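/- (Prolongation theorem for metrisability) With ∇, ε^{bc} and P_{ab} as above, the connection ∇ is projectively equivalent to a Levi–Civita connection on U if and only if there exist smooth tensor fields σ^{ab} = σ^{ba}, μ^a and ρ on U with det(σ^{ab}) nowhere vanishing, satisfying the closed linear system ∇_aσ^{bc} − δ_a^bμ^c − δ_a^cμ^b = 0, ∇_aμ^b − δ_a^bρ + P_{ac}σ^{bc} = 0, and ∇_aρ + 2P_{ab}μ^b − 2Y_{abc}σ^{bc} = 0, where Y_{abc} := (1/2)(∇_aP_{bc} − ∇_bP_{ac}). -/

import Mathlib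

/-!
Let `∇'` have symbols `Γᶜ_{ab} + δᶜ_aω_b + δᶜ_bω_a`. It is the Levi–Civita connection of `g` exactly
when `∇'g = 0`, equivalently `∇'S = 0` for the inverse metric `S = g⁻¹`. If `μ^a = -σ^{ab}ω_b`, then
`∇'_aσ^{bc} - 2ω_aσ^{bc} = ∇_aσ^{bc} - δ_a^bμ^c - δ_a^cμ^b`, so the metrisability equation says that
`∇'σ = 2ω ⊗ σ`. It remains to pass between `∇'S = 0` and `∇'σ = 2ω ⊗ σ` by a rescaling `σ = fS` with
`∂_af = 2ω_af`. The determinants measured by the parallel volume provide `f`: the function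
`det S / ε²` has logarithmic derivative `-6ω` and `det σ / ε²` has `-2ω`, so `f` is
`|det S / ε²|^{-1/3}` in one direction and `(det σ / ε²)⁻¹` in the other.

The other two equations of the system are consequences of the first. Commuting derivatives on `σ`,
with the curvature expressed through `P`, shows that `∇_aμ^b + P_{ac}σ^{bc}` is pure trace, which
defines `ρ`; commuting derivatives on `μ` and taking a trace then gives `∇_aρ`.
-/

noncomputable section

open Matrix

/-- Partial derivative in the first (x) variable. -/
def pdx (f : ℝ × ℝ → ℝ) : ℝ × ℝ → ℝ :=
  fun p => deriv (fun t => f (t, p.2)) p.1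

/-- Partial derivative in the second (y) variable. -/
def pdy (f : ℝ × ℝ → ℝ) : ℝ × ℝ → ℝ :=
  fun p => deriv (fun t => f (p.1, t)) p.2

/-- `pd 0 = ∂ₓ`, `pd 1 = ∂_y`. -/
def pd : Fin 2 → (ℝ × ℝ → ℝ) → (ℝ × ℝ → ℝ) := ![pdx, pdy]

/-- Covariant derivative `∇_a Y_c` of a one-form. -/
def covD1 (Γ : Fin 2 → Fin 2 → Fin 2 → ℝ × ℝ → ℝ) (Y : Fin 2 → ℝ × ℝ → ℝ) :
    Fin 2 → Fin 2 → ℝ × ℝ → ℝ := fun a c q =>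
  pd a (Y c) q - ∑ e : Fin 2, Γ e a c q * Y e q

/-- Covariant derivative `∇_a P_{bc}` of a covariant 2-tensor. -/
def covD2 (Γ : Fin 2 → Fin 2 → Fin 2 → ℝ × ℝ → ℝ) (P : Fin 2 → Fin 2 → ℝ × ℝ → ℝ) :
    Fin 2 → Fin 2 → Fin 2 → ℝ × ℝ → ℝ := fun a b c q =>
  pd a (P b c) q - ∑ e : Fin 2, Γ e a b q * P e c q - ∑ e : Fin 2, Γ e a c q * P b e q

/-- Covariant derivative `∇_a T_{bcd}` of a covariant 3-tensor. -/
def covD3 (Γ : Fin 2 → Fin 2 → Fin 2 → ℝ × ℝ → ℝ)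
    (T : Fin 2 → Fin 2 → Fin 2 → ℝ × ℝ → ℝ) :
    Fin 2 → Fin 2 → Fin 2 → Fin 2 → ℝ × ℝ → ℝ := fun a b c d q =>
  pd a (T b c d) q - ∑ e : Fin 2, Γ e a b q * T e c d q
    - ∑ e : Fin 2, Γ e a c q * T b e d q - ∑ e : Fin 2, Γ e a d q * T b c e q

/-- Curvature `Rᶜ_{abd}` of the torsion-free connection with symbols `Γᶜ_{ab}`. -/
def Rcurv (Γ : Fin 2 → Fin 2 → Fin 2 → ℝ × ℝ → ℝ) :
    Fin 2 → Fin 2 → Fin 2 → Fin 2 → ℝ × ℝ → ℝ := fun c a b d q =>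
  pd a (Γ c b d) q - pd b (Γ c a d) q
    + ∑ e : Fin 2, Γ c a e q * Γ e b d q - ∑ e : Fin 2, Γ c b e q * Γ e a d q

/-- The metric `g = E dx² + 2F dx dy + G dy²` as a matrix. -/
def gmat (E F G : ℝ × ℝ → ℝ) : ℝ × ℝ → Matrix (Fin 2) (Fin 2) ℝ := fun q =>
  !![E q, F q; F q, G q]

/-- Christoffel symbols `Γᶜ_{ab}` of the Levi–Civita connection of `g`. -/
def Christoffel (E F G : ℝ × ℝ → ℝ) (c a b : Fin 2) : ℝ × ℝ → ℝ := fun q =>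
  (1/2) * ∑ d : Fin 2, ((gmat E F G q)⁻¹ c d) *
    (pd a (fun r => gmat E F G r b d) q + pd b (fun r => gmat E F G r a d) q
      - pd d (fun r => gmat E F G r a b) q)

/-- `∇` (with symbols `Γ`) is projectively equivalent to a Levi–Civita connection on `U`:
there are a one-form `ω` and a nondegenerate metric `g` with
`Γᶜ_{ab} + δᶜ_aω_b + δᶜ_bω_a` the Christoffel symbols of `g`. -/
def ProjEquivLeviCivita (U : Set (ℝ × ℝ)) (Γ : Fin 2 → Fin 2 → Fin 2 → ℝ × ℝ → ℝ) : Prop :=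
  ∃ ω : Fin 2 → ℝ × ℝ → ℝ, (∀ a, ContDiffOn ℝ (⊤ : ℕ∞) (ω a) U) ∧
    ∃ E F G : ℝ × ℝ → ℝ,
      ContDiffOn ℝ (⊤ : ℕ∞) E U ∧ ContDiffOn ℝ (⊤ : ℕ∞) F U ∧ ContDiffOn ℝ (⊤ : ℕ∞) G U ∧
      (∀ q ∈ U, E q * G q - (F q) ^ 2 ≠ 0) ∧
      ∀ c a b : Fin 2, ∀ q ∈ U,
        Γ c a b q + (if c = a then ω b q else 0) + (if c = b then ω a q else 0)
          = Christoffel E F G c a b q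

end

noncomputable section

open Filter Topology Matrix

/-! ### Partial derivatives -/

/-- The coordinate vector field `∂_a` of the plane. -/
def coordVec : Fin 2 → ℝ × ℝ := ![(1, 0), (0, 1)]

lemma pd_eq_lineDeriv (a : Fin 2) (f : ℝ × ℝ → ℝ) (q : ℝ × ℝ) :
    pd a f q = lineDeriv ℝ f q (coordVec a) := by
  obtain ⟨x, y⟩ := q
  fin_cases a
  · simpa [lineDeriv, coordVec, pd, pdx] using
      (deriv_comp_const_add (fun t => f (t, y)) x 0).symm
  · simpa [lineDeriv, coordVec, pd, pdy] using
      (deriv_comp_const_add (fun t => f (x, t)) y 0).symm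

section PartialDerivatives

variable {a : Fin 2} {f g : ℝ × ℝ → ℝ} {q : ℝ × ℝ} {U : Set (ℝ × ℝ)}

lemma pd_eq_fderiv (hf : DifferentiableAt ℝ f q) : pd a f q = fderiv ℝ f q (coordVec a) := by
  rw [pd_eq_lineDeriv, hf.lineDeriv_eq_fderiv]

lemma pd_congr (h : f =ᶠ[𝓝 q] g) : pd a f q = pd a g q := by
  rw [pd_eq_lineDeriv, pd_eq_lineDeriv, h.lineDeriv_eq]

lemma pd_const (c : ℝ) : pd a (fun _ => c) q = 0 := by
  simp [pd_eq_fderiv (differentiableAt_const c)]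

lemma pd_add (hf : DifferentiableAt ℝ f q) (hg : DifferentiableAt ℝ g q) :
    pd a (fun r => f r + g r) q = pd a f q + pd a g q := by
  rw [pd_eq_fderiv hf, pd_eq_fderiv hg, pd_eq_fderiv (hf.fun_add hg), fderiv_fun_add hf hg,
    _root_.add_apply]

lemma pd_sub (hf : DifferentiableAt ℝ f q) (hg : DifferentiableAt ℝ g q) :
    pd a (fun r => f r - g r) q = pd a f q - pd a g q := by
  rw [pd_eq_fderiv hf, pd_eq_fderiv hg, pd_eq_fderiv (hf.fun_sub hg), fderiv_fun_sub hf hg,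
    _root_.sub_apply]

lemma pd_mul (hf : DifferentiableAt ℝ f q) (hg : DifferentiableAt ℝ g q) :
    pd a (fun r => f r * g r) q = pd a f q * g q + f q * pd a g q := by
  rw [pd_eq_fderiv hf, pd_eq_fderiv hg, pd_eq_fderiv (hf.fun_mul hg), fderiv_fun_mul hf hg]
  simp [mul_comm, add_comm]

lemma pd_sum {ι : Type*} {s : Finset ι} {F : ι → ℝ × ℝ → ℝ}
    (hF : ∀ i ∈ s, DifferentiableAt ℝ (F i) q) :
    pd a (fun r => ∑ i ∈ s, F i r) q = ∑ i ∈ s, pd a (F i) q := by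
  rw [pd_eq_fderiv (.fun_sum hF), fderiv_fun_sum hF, _root_.sum_apply]
  exact Finset.sum_congr rfl fun i hi => (pd_eq_fderiv (hF i hi)).symm

lemma pd_sum_mul {ι : Type*} {s : Finset ι} {F G : ι → ℝ × ℝ → ℝ}
    (hF : ∀ i ∈ s, DifferentiableAt ℝ (F i) q) (hG : ∀ i ∈ s, DifferentiableAt ℝ (G i) q) :
    pd a (fun r => ∑ i ∈ s, F i r * G i r) q =
      ∑ i ∈ s, (pd a (F i) q * G i q + F i q * pd a (G i) q) := by
  rw [pd_sum fun i hi => (hF i hi).fun_mul (hG i hi)]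
  exact Finset.sum_congr rfl fun i hi => pd_mul (hF i hi) (hG i hi)

lemma differentiableAt_ite_zero (p : Prop) [Decidable p] (hf : DifferentiableAt ℝ f q) :
    DifferentiableAt ℝ (fun r => if p then f r else 0) q := by
  split_ifs
  exacts [hf, differentiableAt_const 0]

lemma pd_ite_zero (p : Prop) [Decidable p] :
    pd a (fun r => if p then f r else 0) q = if p then pd a f q else 0 := by
  split_ifs
  · rfl
  · exact pd_const 0

lemma pd_comp {φ : ℝ → ℝ} {φ' : ℝ} (hφ : HasDerivAt φ φ' (f q)) (hf : DifferentiableAt ℝ f q) :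
    pd a (fun r => φ (f r)) q = φ' * pd a f q := by
  have h := hφ.comp_hasFDerivAt q hf.hasFDerivAt
  rw [pd_eq_fderiv hf]
  exact (pd_eq_fderiv h.differentiableAt).trans (by rw [h.fderiv]; rfl)

lemma pd_div (hf : DifferentiableAt ℝ f q) (hg : DifferentiableAt ℝ g q) (hq : g q ≠ 0) :
    pd a (fun r => f r / g r) q = (pd a f q * g q - f q * pd a g q) / g q ^ 2 := by
  simp only [div_eq_mul_inv (f _)]
  rw [pd_mul hf (hg.fun_inv hq), pd_comp (hasDerivAt_inv hq) hg]
  field_simp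
  ring

lemma pd_exp_mul_log (hf : DifferentiableAt ℝ f q) (hq : f q ≠ 0) (c : ℝ) :
    pd a (fun r => Real.exp (c * Real.log (f r))) q =
      c * (pd a f q / f q) * Real.exp (c * Real.log (f q)) := by
  rw [pd_comp ((Real.hasDerivAt_log hq).const_mul c).exp hf]
  ring

lemma contDiffOn_pd {m n : WithTop ℕ∞} (hU : IsOpen U) (hf : ContDiffOn ℝ n f U)
    (hmn : m + 1 ≤ n) : ContDiffOn ℝ m (pd a f) U := by
  have hd : ∀ r ∈ U, DifferentiableAt ℝ f r := fun r hr =>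
    ((hf.of_le (le_add_self.trans hmn)).differentiableOn one_ne_zero).differentiableAt
      (hU.mem_nhds hr)
  exact ((hf.fderiv_of_isOpen hU hmn).clm_apply contDiffOn_const).congr
    fun r hr => pd_eq_fderiv (hd r hr)

lemma differentiableAt_of_contDiffOn (hf : ContDiffOn ℝ (⊤ : ℕ∞) f U) (hU : IsOpen U)
    (hq : q ∈ U) : DifferentiableAt ℝ f q :=
  (hf.differentiableOn (by simp)).differentiableAt (hU.mem_nhds hq)

lemma eventually_differentiableAt (hf : ContDiffAt ℝ 2 f q) :
    ∀ᶠ r in 𝓝 q, DifferentiableAt ℝ f r :=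
  (hf.eventually (by simp)).mono fun _ hr => hr.differentiableAt two_ne_zero

lemma differentiableAt_fderiv (hf : ContDiffAt ℝ 2 f q) : DifferentiableAt ℝ (fderiv ℝ f) q :=
  (hf.fderiv_right (m := 1) le_rfl).differentiableAt one_ne_zero

lemma differentiableAt_pd (hf : ContDiffAt ℝ 2 f q) (b : Fin 2) : DifferentiableAt ℝ (pd b f) q :=
  ((differentiableAt_fderiv hf).clm_apply (differentiableAt_const _)).congr_of_eventuallyEq
    ((eventually_differentiableAt hf).mono fun _ hr => pd_eq_fderiv hr)

lemma pd_pd (hf : ContDiffAt ℝ 2 f q) (a b : Fin 2) :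
    pd a (pd b f) q = fderiv ℝ (fderiv ℝ f) q (coordVec a) (coordVec b) := by
  have hd := differentiableAt_fderiv hf
  rw [pd_congr ((eventually_differentiableAt hf).mono fun _ hr => pd_eq_fderiv hr),
    pd_eq_fderiv (hd.clm_apply (differentiableAt_const _)),
    fderiv_clm_apply hd (differentiableAt_const _)]
  simp

lemma pd_comm (hf : ContDiffAt ℝ 2 f q) (a b : Fin 2) : pd a (pd b f) q = pd b (pd a f) q := by
  rw [pd_pd hf, pd_pd hf]
  exact hf.isSymmSndFDerivAt (by simp) _ _

end PartialDerivatives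

/-! ### Covariant derivatives of contravariant tensors -/

/-- Covariant derivative `∇_a X^b` of a vector field, the contravariant analogue of `covD1`. -/
def covU1 (Γ : Fin 2 → Fin 2 → Fin 2 → ℝ × ℝ → ℝ) (X : Fin 2 → ℝ × ℝ → ℝ) :
    Fin 2 → Fin 2 → ℝ × ℝ → ℝ := fun a b q =>
  pd a (X b) q + ∑ e, Γ b a e q * X e q

/-- Covariant derivative `∇_a S^{bc}` of a contravariant 2-tensor. -/
def covU2 (Γ : Fin 2 → Fin 2 → Fin 2 → ℝ × ℝ → ℝ) (S : Fin 2 → Fin 2 → ℝ × ℝ → ℝ) :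
    Fin 2 → Fin 2 → Fin 2 → ℝ × ℝ → ℝ := fun a b c q =>
  pd a (S b c) q + ∑ e, Γ b a e q * S e c q + ∑ e, Γ c a e q * S b e q

section CovariantDerivative

variable {Γ : Fin 2 → Fin 2 → Fin 2 → ℝ × ℝ → ℝ} {X Y μ : Fin 2 → ℝ × ℝ → ℝ}
  {S T P : Fin 2 → Fin 2 → ℝ × ℝ → ℝ} {f ρ : ℝ × ℝ → ℝ} {q : ℝ × ℝ}

lemma covU1_congr (h : ∀ b, X b =ᶠ[𝓝 q] Y b) (a b : Fin 2) :
    covU1 Γ X a b q = covU1 Γ Y a b q := by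
  simp only [covU1, pd_congr (h b), (h _).eq_of_nhds]

lemma covU2_congr (h : ∀ b c, S b c =ᶠ[𝓝 q] T b c) (a b c : Fin 2) :
    covU2 Γ S a b c q = covU2 Γ T a b c q := by
  simp only [covU2, pd_congr (h b c), (h _ _).eq_of_nhds]

lemma covU1_sub {b : Fin 2} (hX : DifferentiableAt ℝ (X b) q) (hY : DifferentiableAt ℝ (Y b) q)
    (a : Fin 2) :
    covU1 Γ (fun b r => X b r - Y b r) a b q = covU1 Γ X a b q - covU1 Γ Y a b q := by
  simp only [covU1, pd_sub hX hY, mul_sub, Finset.sum_sub_distrib]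
  ring

lemma covU2_mul (hf : DifferentiableAt ℝ f q) {b c : Fin 2} (hS : DifferentiableAt ℝ (S b c) q)
    (a : Fin 2) :
    covU2 Γ (fun b c r => f r * S b c r) a b c q =
      pd a f q * S b c q + f q * covU2 Γ S a b c q := by
  simp only [covU2, pd_mul hf hS, Fin.sum_univ_two]
  ring

/-- The Leibniz rule for `P_{dc}S^{bc}`; as `d` is only a label of the left-hand side, the
correction term `Γᵉ_{ad}P_{ec}S^{bc}` appears. -/
lemma covU1_contract (hP : ∀ b c, DifferentiableAt ℝ (P b c) q)
    (hS : ∀ b c, DifferentiableAt ℝ (S b c) q) (a b d : Fin 2) :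
    covU1 Γ (fun b r => ∑ c, P d c r * S b c r) a b q =
      ∑ c, (covD2 Γ P a d c q * S b c q + P d c q * covU2 Γ S a b c q)
        + ∑ e, Γ e a d q * ∑ c, P e c q * S b c q := by
  rw [covU1, pd_sum fun c _ => (hP d c).fun_mul (hS b c)]
  simp only [covU2, covD2, pd_mul (hP _ _) (hS _ _), Fin.sum_univ_two]
  ring

/-- The inner derivatives `∇_bX` and `∇_aX` are differentiated as vector fields, with `b` and `a` as
mere labels; the omitted terms `Γᵉ_{ab}∇_eX^c` cancel for symmetric `Γ`. -/
lemma ricci_identity_vector (hΓ : ∀ c a b, DifferentiableAt ℝ (Γ c a b) q)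
    (hX : ∀ c, ContDiffAt ℝ 2 (X c) q) (a b c : Fin 2) :
    covU1 Γ (covU1 Γ X b) a c q - covU1 Γ (covU1 Γ X a) b c q = ∑ e, Rcurv Γ c a b e q * X e q := by
  have hX' := fun e (_ : e ∈ Finset.univ) => (hX e).differentiableAt two_ne_zero
  have hcov : ∀ a b, pd a (covU1 Γ X b c) q = pd a (pd b (X c)) q
      + ∑ e, (pd a (Γ c b e) q * X e q + Γ c b e q * pd a (X e) q) := fun a b => by
    have hΓX := fun e (he : e ∈ Finset.univ) => (hΓ c b e).fun_mul (hX' e he)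
    unfold covU1
    rw [pd_add (differentiableAt_pd (hX c) b) (.fun_sum hΓX),
      pd_sum_mul (fun e _ => hΓ c b e) hX']
  rw [covU1, covU1, hcov, hcov, pd_comm (hX c) b a]
  simp only [covU1, Rcurv, Fin.sum_univ_two]
  ring

lemma ricci_identity_bivector (hΓ : ∀ c a b, DifferentiableAt ℝ (Γ c a b) q)
    (hS : ∀ c d, ContDiffAt ℝ 2 (S c d) q) (a b c d : Fin 2) :
    covU2 Γ (covU2 Γ S b) a c d q - covU2 Γ (covU2 Γ S a) b c d q =
      ∑ e, Rcurv Γ c a b e q * S e d q + ∑ e, Rcurv Γ d a b e q * S c e q := by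
  have hS' := fun c d => (hS c d).differentiableAt two_ne_zero
  have hcov : ∀ a b, pd a (covU2 Γ S b c d) q = pd a (pd b (S c d)) q
      + ∑ e, (pd a (Γ c b e) q * S e d q + Γ c b e q * pd a (S e d) q)
      + ∑ e, (pd a (Γ d b e) q * S c e q + Γ d b e q * pd a (S c e) q) := fun a b => by
    have hΓS := fun e (_ : e ∈ Finset.univ) => (hΓ c b e).fun_mul (hS' e d)
    have hΓS' := fun e (_ : e ∈ Finset.univ) => (hΓ d b e).fun_mul (hS' c e)
    have hpd := differentiableAt_pd (hS c d) b
    unfold covU2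
    rw [pd_add (hpd.fun_add (.fun_sum hΓS)) (.fun_sum hΓS'), pd_add hpd (.fun_sum hΓS),
      pd_sum_mul (fun e _ => hΓ c b e) fun e _ => hS' e d,
      pd_sum_mul (fun e _ => hΓ d b e) fun e _ => hS' c e]
  rw [covU2, covU2, hcov, hcov, pd_comm (hS c d) b a]
  simp only [covU2, Rcurv, Fin.sum_univ_two]
  ring

end CovariantDerivative

/-! ### Prolongation of the metrisability equation -/

/-- The defect `∇_aσ^{bc} - δ_a^bμ^c - δ_a^cμ^b` of the metrisability equation, whose vanishing is
the first equation of the prolonged system. -/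
def metrisabilityDefect (Γ : Fin 2 → Fin 2 → Fin 2 → ℝ × ℝ → ℝ)
    (σ : Fin 2 → Fin 2 → ℝ × ℝ → ℝ) (μ : Fin 2 → ℝ × ℝ → ℝ) :
    Fin 2 → Fin 2 → Fin 2 → ℝ × ℝ → ℝ := fun a b c q =>
  covU2 Γ σ a b c q - (if a = b then μ c q else 0) - (if a = c then μ b q else 0)

/-- `P` is the Schouten tensor of `Γ` at `q`, in the sense that
`R^c_{abd} = δ^c_a P_{bd} - δ^c_b P_{ad}`. -/
def IsSchoutenAt (Γ : Fin 2 → Fin 2 → Fin 2 → ℝ × ℝ → ℝ) (P : Fin 2 → Fin 2 → ℝ × ℝ → ℝ)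
    (q : ℝ × ℝ) : Prop :=
  ∀ c a b d, Rcurv Γ c a b d q = (if c = a then P b d q else 0) - (if c = b then P a d q else 0)

/-- The function `ρ = ½(∇_aμ^a + P_{ac}σ^{ac})` completing a solution `(σ, μ)` of the metrisability
equation to a solution of the prolonged system. -/
def prolongedRho (Γ : Fin 2 → Fin 2 → Fin 2 → ℝ × ℝ → ℝ) (P σ : Fin 2 → Fin 2 → ℝ × ℝ → ℝ)
    (μ : Fin 2 → ℝ × ℝ → ℝ) : ℝ × ℝ → ℝ := fun q =>
  (∑ a, (covU1 Γ μ a a q + ∑ c, P a c q * σ a c q)) / 2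

lemma eq_trace_smul_one {ι K : Type*} [Fintype ι] [DecidableEq ι] [Field K] [CharZero K]
    {M : Matrix ι ι K}
    (h : ∀ a b c d, (if b = c then M a d else 0) + (if b = d then M a c else 0) =
      (if a = c then M b d else 0) + (if a = d then M b c else 0)) :
    M = (M.trace / Fintype.card ι) • 1 := by
  have hoff : ∀ a b, a ≠ b → M a b = 0 := fun a b hab => by simpa [hab] using h a b b b
  have hdiag : ∀ a b, M a a = M b b := fun a b => by
    obtain rfl | hab := eq_or_ne a b
    · rfl
    · simpa [hab, hab.symm] using h a b b a
  ext a b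
  have : Nonempty ι := ⟨a⟩
  obtain rfl | hab := eq_or_ne a b
  · simp [Matrix.trace, hdiag _ a]
  · simp [hab, hoff a b hab]

section Prolongation

variable {Γ : Fin 2 → Fin 2 → Fin 2 → ℝ × ℝ → ℝ} {P σ : Fin 2 → Fin 2 → ℝ × ℝ → ℝ}
  {μ : Fin 2 → ℝ × ℝ → ℝ} {ρ : ℝ × ℝ → ℝ} {q : ℝ × ℝ} {U : Set (ℝ × ℝ)}

lemma IsSchoutenAt.sum_rcurv_mul (hP : IsSchoutenAt Γ P q) (X : Fin 2 → ℝ) (a b c : Fin 2) :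
    ∑ e, Rcurv Γ c a b e q * X e =
      (if a = c then ∑ e, P b e q * X e else 0) - (if b = c then ∑ e, P a e q * X e else 0) := by
  simp only [hP c a b, eq_comm (a := c), sub_mul, ite_mul, zero_mul, Finset.sum_sub_distrib]
  split_ifs <;> simp

lemma covU1_delta_mul (a b c : Fin 2) :
    covU1 Γ (fun c r => if b = c then ρ r else 0) a c q =
      (if b = c then pd a ρ q else 0) + Γ c a b q * ρ q := by
  simp only [covU1, pd_ite_zero, mul_ite, mul_zero, Finset.sum_ite_eq, Finset.mem_univ, if_true]

lemma covU2_symm_delta_mul (hμ : ∀ b, DifferentiableAt ℝ (μ b) q) (a b c d : Fin 2) :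
    covU2 Γ (fun c d r => (if b = c then μ d r else 0) + (if b = d then μ c r else 0)) a c d q =
      (if b = c then covU1 Γ μ a d q else 0) + (if b = d then covU1 Γ μ a c q else 0)
        + Γ c a b q * μ d q + Γ d a b q * μ c q := by
  simp only [covU2, pd_add (differentiableAt_ite_zero _ (hμ _))
    (differentiableAt_ite_zero _ (hμ _)), pd_ite_zero, covU1, mul_add, mul_ite, mul_zero,
    Finset.sum_add_distrib, Finset.sum_ite_eq, Finset.mem_univ, if_true]
  split_ifs <;> simp <;> ring

/-- Commuting derivatives on `σ` shows that `∇_aμ^b + P_{ac}σ^{bc}` is pure trace. -/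
lemma covU1_eq_of_metrisabilityDefect_eq_zero (hΓsym : ∀ c a b, Γ c a b q = Γ c b a q)
    (hΓ : ∀ c a b, DifferentiableAt ℝ (Γ c a b) q)
    (hP : IsSchoutenAt Γ P q) (hσsym : ∀ a b, σ a b q = σ b a q)
    (hσ : ∀ b c, ContDiffAt ℝ 2 (σ b c) q) (hμ : ∀ b, DifferentiableAt ℝ (μ b) q)
    (h : ∀ a b c, ∀ᶠ r in 𝓝 q, metrisabilityDefect Γ σ μ a b c r = 0) (a b : Fin 2) :
    covU1 Γ μ a b q - (if a = b then prolongedRho Γ P σ μ q else 0)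
      + ∑ c, P a c q * σ b c q = 0 := by
  set M : Matrix (Fin 2) (Fin 2) ℝ := .of fun a b => covU1 Γ μ a b q + ∑ c, P a c q * σ b c q
    with hM
  have hcomm : ∀ a b c d, (if b = c then M a d else 0) + (if b = d then M a c else 0) =
      (if a = c then M b d else 0) + (if a = d then M b c else 0) := fun a b c d => by
    have hcov : ∀ a b, covU2 Γ (covU2 Γ σ b) a c d q = _ := fun a b =>
      (covU2_congr (fun c d => (h b c d).mono fun r hr => by
        unfold metrisabilityDefect at hr
        linear_combination hr) a c d).trans (covU2_symm_delta_mul hμ a b c d)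
    have hricci := ricci_identity_bivector hΓ hσ a b c d
    rw [hcov, hcov, hΓsym c b a, hΓsym d b a, hP.sum_rcurv_mul (σ · d q),
      hP.sum_rcurv_mul (σ c · q)] at hricci
    simp only [hσsym _ d] at hricci
    simp only [hM, Matrix.of_apply]
    split_ifs at hricci ⊢ <;> linear_combination hricci
  have htrace := congrFun₂ (eq_trace_smul_one hcomm) a b
  simp only [hM, Matrix.of_apply, Matrix.trace, Matrix.diag_apply, Fintype.card_fin,
    Matrix.smul_apply, Matrix.one_apply, smul_eq_mul, mul_ite, mul_one, mul_zero,
    Nat.cast_ofNat] at htrace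
  rw [prolongedRho]
  linear_combination htrace

/-- Commuting derivatives on `μ`, before taking a trace. -/
lemma curl_rho_of_covU1_eq (hΓsym : ∀ c a b, Γ c a b q = Γ c b a q)
    (hΓ : ∀ c a b, DifferentiableAt ℝ (Γ c a b) q)
    (hPsym : ∀ a b, P a b q = P b a q) (hPd : ∀ a b, DifferentiableAt ℝ (P a b) q)
    (hP : IsSchoutenAt Γ P q) (hσ : ∀ b c, DifferentiableAt ℝ (σ b c) q)
    (hμ : ∀ b, ContDiffAt ℝ 2 (μ b) q) (hρ : DifferentiableAt ℝ ρ q)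
    (hσμ : ∀ a b c, metrisabilityDefect Γ σ μ a b c q = 0)
    (h : ∀ a b, ∀ᶠ r in 𝓝 q,
      covU1 Γ μ a b r - (if a = b then ρ r else 0) + ∑ c, P a c r * σ b c r = 0)
    (a b c : Fin 2) :
    (if b = c then pd a ρ q + 2 * ∑ e, P a e q * μ e q else 0)
      - (if a = c then pd b ρ q + 2 * ∑ e, P b e q * μ e q else 0) =
    ∑ d, (covD2 Γ P a b d q - covD2 Γ P b a d q) * σ c d q := by
  have hcov : ∀ a b, covU1 Γ (covU1 Γ μ b) a c q = (if b = c then pd a ρ q else 0)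
      + Γ c a b q * ρ q - (∑ d, (covD2 Γ P a b d q * σ c d q + P b d q * covU2 Γ σ a c d q)
        + ∑ e, Γ e a b q * ∑ d, P e d q * σ c d q) := fun a b => by
    rw [← covU1_contract hPd hσ, ← covU1_delta_mul, ← covU1_sub
      (differentiableAt_ite_zero _ hρ) (.fun_sum fun d _ => (hPd b d).fun_mul (hσ c d))]
    exact covU1_congr (fun c => (h b c).mono fun r hr => by linear_combination hr) a c
  have hσcov : ∀ a b, ∑ d, (covD2 Γ P a b d q * σ c d q + P b d q * covU2 Γ σ a c d q) =
      ∑ d, covD2 Γ P a b d q * σ c d q + (if a = c then ∑ d, P b d q * μ d q else 0)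
        + P b a q * μ c q := fun a b => by
    have hσ' : ∀ d, covU2 Γ σ a c d q =
        (if a = c then μ d q else 0) + (if a = d then μ c q else 0) := fun d => by
      linear_combination (norm := (unfold metrisabilityDefect; ring)) hσμ a c d
    simp only [hσ', mul_add, mul_ite, mul_zero, Finset.sum_add_distrib, Finset.sum_ite_eq,
      Finset.mem_univ, if_true]
    split_ifs <;> simp [add_assoc]
  have hricci := ricci_identity_vector hΓ hμ a b c
  rw [hcov, hcov, hσcov, hσcov, hP.sum_rcurv_mul (μ · q), hPsym b a] at hricci
  simp only [hΓsym _ b a] at hricci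
  simp only [sub_mul, Finset.sum_sub_distrib]
  split_ifs at hricci ⊢ <;> linear_combination hricci

lemma pd_rho_eq_of_covU1_eq (hΓsym : ∀ c a b, Γ c a b q = Γ c b a q)
    (hΓ : ∀ c a b, DifferentiableAt ℝ (Γ c a b) q)
    (hPsym : ∀ a b, P a b q = P b a q) (hPd : ∀ a b, DifferentiableAt ℝ (P a b) q)
    (hP : IsSchoutenAt Γ P q) (hσ : ∀ b c, DifferentiableAt ℝ (σ b c) q)
    (hμ : ∀ b, ContDiffAt ℝ 2 (μ b) q) (hρ : DifferentiableAt ℝ ρ q)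
    (hσμ : ∀ a b c, metrisabilityDefect Γ σ μ a b c q = 0)
    (h : ∀ a b, ∀ᶠ r in 𝓝 q,
      covU1 Γ μ a b r - (if a = b then ρ r else 0) + ∑ c, P a c r * σ b c r = 0) (a : Fin 2) :
    pd a ρ q + 2 * (∑ b, P a b q * μ b q)
      - 2 * (∑ b, ∑ c, (1 / 2) * (covD2 Γ P a b c q - covD2 Γ P b a c q) * σ b c q) = 0 := by
  have htrace := Finset.sum_congr (rfl : (Finset.univ : Finset (Fin 2)) = _) fun b _ =>
    curl_rho_of_covU1_eq hΓsym hΓ hPsym hPd hP hσ hμ hρ hσμ h a b b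
  simp only [if_true, Finset.sum_sub_distrib, Finset.sum_const, Finset.card_univ, Fintype.card_fin,
    Finset.sum_ite_eq, Finset.mem_univ, nsmul_eq_mul, Nat.cast_ofNat] at htrace
  simp only [mul_assoc (1 / 2 : ℝ), ← Finset.mul_sum]
  linear_combination htrace

lemma contDiffOn_prolongedRho (hU : IsOpen U) (hΓ : ∀ c a b, ContDiffOn ℝ (⊤ : ℕ∞) (Γ c a b) U)
    (hP : ∀ a b, ContDiffOn ℝ (⊤ : ℕ∞) (P a b) U) (hσ : ∀ a b, ContDiffOn ℝ (⊤ : ℕ∞) (σ a b) U)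
    (hμ : ∀ a, ContDiffOn ℝ (⊤ : ℕ∞) (μ a) U) :
    ContDiffOn ℝ (⊤ : ℕ∞) (prolongedRho Γ P σ μ) U := by
  have hcov : ∀ a, ContDiffOn ℝ (⊤ : ℕ∞) (covU1 Γ μ a a) U := fun a =>
    (contDiffOn_pd hU (hμ a) (by simp)).add
      (ContDiffOn.sum fun e _ => (hΓ a a e).mul (hμ e))
  exact (ContDiffOn.sum fun a _ => (hcov a).add
    (ContDiffOn.sum fun c _ => (hP a c).mul (hσ a c))).div_const 2

theorem prolonged_system_of_metrisabilityDefect_eq_zero (hU : IsOpen U)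
    (hΓsym : ∀ c a b, Γ c a b = Γ c b a) (hΓ : ∀ c a b, ContDiffOn ℝ (⊤ : ℕ∞) (Γ c a b) U)
    (hPsym : ∀ a b, P a b = P b a) (hP : ∀ a b, ContDiffOn ℝ (⊤ : ℕ∞) (P a b) U)
    (hSchouten : ∀ q ∈ U, IsSchoutenAt Γ P q) (hσsym : ∀ a b, σ a b = σ b a)
    (hσ : ∀ a b, ContDiffOn ℝ (⊤ : ℕ∞) (σ a b) U) (hμ : ∀ a, ContDiffOn ℝ (⊤ : ℕ∞) (μ a) U)
    (h : ∀ q ∈ U, ∀ a b c, metrisabilityDefect Γ σ μ a b c q = 0) (hq : q ∈ U) :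
    (∀ a b, covU1 Γ μ a b q - (if a = b then prolongedRho Γ P σ μ q else 0)
      + ∑ c, P a c q * σ b c q = 0) ∧
    ∀ a, pd a (prolongedRho Γ P σ μ) q + 2 * (∑ b, P a b q * μ b q)
      - 2 * (∑ b, ∑ c, (1 / 2) * (covD2 Γ P a b c q - covD2 Γ P b a c q) * σ b c q) = 0 := by
  have hd : ∀ {f : ℝ × ℝ → ℝ} {r}, ContDiffOn ℝ (⊤ : ℕ∞) f U → r ∈ U → DifferentiableAt ℝ f r :=
    fun hf hr => differentiableAt_of_contDiffOn hf hU hr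
  have hC2 : ∀ {f : ℝ × ℝ → ℝ} {r}, ContDiffOn ℝ (⊤ : ℕ∞) f U → r ∈ U → ContDiffAt ℝ 2 f r :=
    fun hf hr => (hf.contDiffAt (hU.mem_nhds hr)).of_le ENat.LEInfty.out
  have hcovμ : ∀ r ∈ U, ∀ a b, covU1 Γ μ a b r - (if a = b then prolongedRho Γ P σ μ r else 0)
      + ∑ c, P a c r * σ b c r = 0 := fun r hr =>
    covU1_eq_of_metrisabilityDefect_eq_zero (fun c a b => congrFun (hΓsym c a b) r)
      (fun c a b => hd (hΓ c a b) hr) (hSchouten r hr) (fun a b => congrFun (hσsym a b) r)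
      (fun b c => hC2 (hσ b c) hr) (fun b => hd (hμ b) hr)
      fun a b c => (hU.eventually_mem hr).mono fun s hs => h s hs a b c
  exact ⟨hcovμ q hq, pd_rho_eq_of_covU1_eq (fun c a b => congrFun (hΓsym c a b) q)
    (fun c a b => hd (hΓ c a b) hq) (fun a b => congrFun (hPsym a b) q)
    (fun a b => hd (hP a b) hq) (hSchouten q hq) (fun b c => hd (hσ b c) hq)
    (fun b => hC2 (hμ b) hq) (hd (contDiffOn_prolongedRho hU hΓ hP hσ hμ) hq) (h q hq)
    fun a b => (hU.eventually_mem hq).mono fun r hr => hcovμ r hr a b⟩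

end Prolongation

/-! ### Metrics in the projective class -/

section MatrixSmoothness

variable {E ι : Type*} [NormedAddCommGroup E] [NormedSpace ℝ E] [Fintype ι] [DecidableEq ι]
  {n : WithTop ℕ∞} {s : Set E} {M : E → Matrix ι ι ℝ}

lemma contDiffOn_matrix_det (hM : ∀ i j, ContDiffOn ℝ n (fun x => M x i j) s) :
    ContDiffOn ℝ n (fun x => (M x).det) s := by
  simp only [Matrix.det_apply']
  exact ContDiffOn.sum fun τ _ => contDiffOn_const.mul (contDiffOn_prod fun i _ => hM (τ i) i)

lemma contDiffOn_matrix_inv (hM : ∀ i j, ContDiffOn ℝ n (fun x => M x i j) s)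
    (hdet : ∀ x ∈ s, (M x).det ≠ 0) (i j : ι) : ContDiffOn ℝ n (fun x => (M x)⁻¹ i j) s := by
  simp only [Matrix.inv_def, Matrix.smul_apply, Ring.inverse_eq_inv', smul_eq_mul,
    Matrix.adjugate_apply]
  refine ((contDiffOn_matrix_det hM).inv hdet).mul (contDiffOn_matrix_det fun k l => ?_)
  obtain rfl | hk := eq_or_ne k j
  · simpa only [Matrix.updateRow_self] using contDiffOn_const
  · simpa only [Matrix.updateRow_ne hk] using hM k l

end MatrixSmoothness

/-- The components of the 2-tensor `S` at `q`, as a matrix. -/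
def matrixAt (S : Fin 2 → Fin 2 → ℝ × ℝ → ℝ) (q : ℝ × ℝ) : Matrix (Fin 2) (Fin 2) ℝ :=
  .of fun b c => S b c q

/-- `S` is a smooth nondegenerate symmetric 2-tensor on `U`. The index position is immaterial, so
this covers both metrics `g_{ab}` and inverse metrics `g^{ab}`. -/
structure IsMetricOn (U : Set (ℝ × ℝ)) (S : Fin 2 → Fin 2 → ℝ × ℝ → ℝ) : Prop where
  symm : ∀ a b, S a b = S b a
  contDiffOn : ∀ a b, ContDiffOn ℝ (⊤ : ℕ∞) (S a b) U
  det_ne_zero : ∀ q ∈ U, (matrixAt S q).det ≠ 0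

/-- The connection `Γ^c_{ab} + δ^c_aω_b + δ^c_bω_a` projectively equivalent to `Γ`. -/
def projChange (Γ : Fin 2 → Fin 2 → Fin 2 → ℝ × ℝ → ℝ) (ω : Fin 2 → ℝ × ℝ → ℝ) :
    Fin 2 → Fin 2 → Fin 2 → ℝ × ℝ → ℝ := fun c a b q =>
  Γ c a b q + (if c = a then ω b q else 0) + (if c = b then ω a q else 0)

/-- The determinant of the bivector `S` measured by the volume bivector with component
`e = ε^{01}`; unlike `det S` it does not depend on the coordinates. -/
def relDet (e : ℝ × ℝ → ℝ) (S : Fin 2 → Fin 2 → ℝ × ℝ → ℝ) : ℝ × ℝ → ℝ := fun q =>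
  (matrixAt S q).det / e q ^ 2

section IsMetricOn

variable {U : Set (ℝ × ℝ)} {S : Fin 2 → Fin 2 → ℝ × ℝ → ℝ} {E F G e f : ℝ × ℝ → ℝ}
  {q : ℝ × ℝ}

lemma IsMetricOn.differentiableAt (hS : IsMetricOn U S) (hU : IsOpen U) (hq : q ∈ U)
    (b c : Fin 2) : DifferentiableAt ℝ (S b c) q :=
  differentiableAt_of_contDiffOn (hS.contDiffOn b c) hU hq

lemma IsMetricOn.inv (hS : IsMetricOn U S) :
    IsMetricOn U (fun b c q => (matrixAt S q)⁻¹ b c) where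
  symm b c := funext fun q =>
    (Matrix.IsSymm.ext fun i j => congrFun (hS.symm j i) q).inv.apply c b
  contDiffOn := contDiffOn_matrix_inv hS.contDiffOn hS.det_ne_zero
  det_ne_zero q hq := (Matrix.isUnit_nonsing_inv_det _ (hS.det_ne_zero q hq).isUnit).ne_zero

lemma IsMetricOn.mul (hS : IsMetricOn U S) (hf : ContDiffOn ℝ (⊤ : ℕ∞) f U)
    (hf0 : ∀ q ∈ U, f q ≠ 0) : IsMetricOn U (fun b c q => f q * S b c q) where
  symm b c := by simp only [hS.symm b c]
  contDiffOn b c := hf.mul (hS.contDiffOn b c)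
  det_ne_zero q hq := by
    have h : matrixAt (fun b c q => f q * S b c q) q = f q • matrixAt S q := rfl
    rw [h, Matrix.det_smul]
    exact mul_ne_zero (pow_ne_zero _ (hf0 q hq)) (hS.det_ne_zero q hq)

lemma IsMetricOn.contDiffOn_relDet (hS : IsMetricOn U S) (he : ContDiffOn ℝ (⊤ : ℕ∞) e U)
    (he0 : ∀ q ∈ U, e q ≠ 0) : ContDiffOn ℝ (⊤ : ℕ∞) (relDet e S) U :=
  (contDiffOn_matrix_det hS.contDiffOn).div (he.pow 2) fun q hq => pow_ne_zero 2 (he0 q hq)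

lemma IsMetricOn.relDet_ne_zero (hS : IsMetricOn U S) (he0 : ∀ q ∈ U, e q ≠ 0) :
    ∀ q ∈ U, relDet e S q ≠ 0 := fun q hq =>
  div_ne_zero (hS.det_ne_zero q hq) (pow_ne_zero 2 (he0 q hq))

lemma isMetricOn_gmat (hE : ContDiffOn ℝ (⊤ : ℕ∞) E U) (hF : ContDiffOn ℝ (⊤ : ℕ∞) F U)
    (hG : ContDiffOn ℝ (⊤ : ℕ∞) G U) (h : ∀ q ∈ U, E q * G q - F q ^ 2 ≠ 0) :
    IsMetricOn U (fun b c q => gmat E F G q b c) where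
  symm b c := by fin_cases b <;> fin_cases c <;> rfl
  contDiffOn b c := by fin_cases b <;> fin_cases c <;> assumption
  det_ne_zero q hq := by simpa [matrixAt, gmat, Matrix.det_fin_two, sq] using h q hq

lemma IsMetricOn.gmat_eq (hS : IsMetricOn U S) :
    (fun b c q => gmat (S 0 0) (S 0 1) (S 1 1) q b c) = S := by
  funext b c q
  fin_cases b <;> fin_cases c <;> simp [gmat, hS.symm 1 0]

end IsMetricOn

section Compatibility

lemma eq_inv_mulVec_iff {ι R : Type*} [Fintype ι] [DecidableEq ι] [CommRing R]
    {g : Matrix ι ι R} (hg : IsUnit g.det) {v w : ι → R} : v = g⁻¹ *ᵥ w ↔ g *ᵥ v = w :=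
  ⟨fun h => by simp [h, Matrix.mul_nonsing_inv g hg],
    fun h => by simp [← h, Matrix.nonsing_inv_mul g hg]⟩

/-- The cyclic combination `∂_ag_{bd} + ∂_bg_{ad} - ∂_dg_{ab}` solves the compatibility equations
for the lowered symbols. -/
lemma koszul_formula_iff {ι K : Type*} [Fintype ι] [DecidableEq ι] [Field K] [CharZero K]
    {g : Matrix ι ι K} (hg : IsUnit g.det) (hgsym : g.IsSymm) {C dg : ι → ι → ι → K}
    (hC : ∀ c a b, C c a b = C c b a) (hdg : ∀ a b c, dg a b c = dg a c b) :
    (∀ c a b, C c a b = (1 / 2) * ∑ d, g⁻¹ c d * (dg a b d + dg b a d - dg d a b)) ↔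
      ∀ a b c, dg a b c = ∑ e, C e a b * g e c + ∑ e, C e a c * g b e := by
  -- `L d a b` is `C` with its upper index lowered by `g`.
  set L : ι → ι → ι → K := fun d a b => ∑ e, C e a b * g e d with hL
  have hLsym : ∀ d a b, L d a b = L d b a := fun d a b => by simp only [hL, hC _ a b]
  have hlower : ∀ a b, (∀ c, C c a b = (1 / 2) * ∑ d, g⁻¹ c d * (dg a b d + dg b a d - dg d a b))
      ↔ ∀ d, L d a b = (1 / 2) * (dg a b d + dg b a d - dg d a b) := fun a b => by
    have := eq_inv_mulVec_iff hg (v := fun c => C c a b)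
      (w := fun d => (1 / 2) * (dg a b d + dg b a d - dg d a b))
    simpa only [funext_iff, Matrix.mulVec, dotProduct, Finset.mul_sum, mul_left_comm, hL,
      hgsym.apply, mul_comm (C _ _ _)] using this
  calc _ ↔ ∀ a b d, L d a b = (1 / 2) * (dg a b d + dg b a d - dg d a b) :=
        ⟨fun h a b => (hlower a b).1 (h · a b), fun h c a b => (hlower a b).2 (h a b) c⟩
    _ ↔ ∀ a b c, dg a b c = L c a b + L b a c := ⟨fun h a b c => ?_, fun h a b d => ?_⟩
    _ ↔ _ := by simp only [hL, hgsym.apply]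
  · linear_combination (1 / 2) * hdg a b c - h a b c - h a c b
  · linear_combination (-1 / 2) * (h a b d + h b a d - h d a b)
      + (1 / 2) * (hLsym d a b - hLsym b a d - hLsym a b d)

variable {C : Fin 2 → Fin 2 → Fin 2 → ℝ × ℝ → ℝ} {g S : Fin 2 → Fin 2 → ℝ × ℝ → ℝ}
  {E F G : ℝ × ℝ → ℝ} {q : ℝ × ℝ}

lemma eq_christoffel_iff_covD2_eq_zero (hdet : (gmat E F G q).det ≠ 0)
    (hC : ∀ c a b, C c a b q = C c b a q) :
    (∀ c a b, C c a b q = Christoffel E F G c a b q) ↔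
      ∀ a b c, covD2 C (fun b c r => gmat E F G r b c) a b c q = 0 := by
  have hsymm : ∀ r, (gmat E F G r).IsSymm := fun r =>
    Matrix.IsSymm.ext fun i j => by fin_cases i <;> fin_cases j <;> rfl
  refine (koszul_formula_iff (C := fun c a b => C c a b q)
    (dg := fun a b c => pd a (fun r => gmat E F G r b c) q) hdet.isUnit (hsymm q) hC
    fun a b c => by simp only [(hsymm _).apply b c]).trans ?_
  simp only [covD2, sub_sub, sub_eq_zero]

/-- Differentiating `gS = 1` gives `(∇_ag)S = -g(∇_aS)`. -/
lemma covD2_eq_zero_iff_covU2_eq_zero (hg : ∀ b c, DifferentiableAt ℝ (g b c) q)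
    (hS : ∀ b c, DifferentiableAt ℝ (S b c) q)
    (h : ∀ᶠ r in 𝓝 q, matrixAt g r * matrixAt S r = 1) (a : Fin 2) :
    (∀ b c, covD2 C g a b c q = 0) ↔ ∀ b c, covU2 C S a b c q = 0 := by
  set A : Matrix (Fin 2) (Fin 2) ℝ := .of fun c b => C c a b q
  set Dg : Matrix (Fin 2) (Fin 2) ℝ := .of fun b c => pd a (g b c) q
  set DS : Matrix (Fin 2) (Fin 2) ℝ := .of fun b c => pd a (S b c) q
  have hpd : Dg * matrixAt S q + matrixAt g q * DS = 0 := by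
    ext b c
    have hconst := pd_congr (a := a) (h.mono fun r hr => congrFun₂ hr b c)
    rw [pd_const] at hconst
    simp only [Matrix.mul_apply, matrixAt, Matrix.of_apply] at hconst
    rw [pd_sum_mul (fun e _ => hg b e) fun e _ => hS e c] at hconst
    simpa [Matrix.mul_apply, matrixAt, Dg, DS, Finset.sum_add_distrib] using hconst
  set covg : Matrix (Fin 2) (Fin 2) ℝ := Dg - Aᵀ * matrixAt g q - matrixAt g q * A
  set covS : Matrix (Fin 2) (Fin 2) ℝ := DS + A * matrixAt S q + matrixAt S q * Aᵀ
  have hcovg : ∀ b c, covD2 C g a b c q = covg b c := fun b c => by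
    simp [covD2, covg, Dg, A, matrixAt, Matrix.mul_apply, mul_comm]
  have hcovS : ∀ b c, covU2 C S a b c q = covS b c := fun b c => by
    simp [covU2, covS, DS, A, matrixAt, Matrix.mul_apply, mul_comm]
  have hgS := h.self_of_nhds
  have hSg := mul_eq_one_comm.1 hgS
  have hleibniz : covg * matrixAt S q = -(matrixAt g q * covS) := by
    simp only [covg, covS, sub_mul, mul_add, ← mul_assoc, hgS, one_mul]
    simp only [mul_assoc, hgS, mul_one]
    linear_combination (norm := abel) hpd
  simp only [hcovg, hcovS]
  have hiff : covg = 0 ↔ covS = 0 := by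
    constructor <;> intro h0
    · rw [← one_mul covS, ← hSg, mul_assoc, ← neg_neg (_ * covS), ← hleibniz, h0]
      simp
    · rw [← mul_one covg, ← hSg, ← mul_assoc, hleibniz, h0]
      simp
  simpa only [← Matrix.ext_iff, Matrix.zero_apply] using hiff

end Compatibility

/-! ### Projective change of connection -/

section ProjectiveChange

variable {Γ : Fin 2 → Fin 2 → Fin 2 → ℝ × ℝ → ℝ} {ω μ : Fin 2 → ℝ × ℝ → ℝ}
  {ε S σ : Fin 2 → Fin 2 → ℝ × ℝ → ℝ} {e : ℝ × ℝ → ℝ} {q : ℝ × ℝ} {U : Set (ℝ × ℝ)}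

lemma projChange_symm (hΓsym : ∀ c a b, Γ c a b q = Γ c b a q) (c a b : Fin 2) :
    projChange Γ ω c a b q = projChange Γ ω c b a q := by
  rw [projChange, projChange, hΓsym]
  ring

lemma covU2_projChange (hσ : ∀ b c, σ b c q = σ c b q)
    (hμ : ∀ b, μ b q = -∑ e, σ b e q * ω e q) (a b c : Fin 2) :
    covU2 (projChange Γ ω) σ a b c q =
      metrisabilityDefect Γ σ μ a b c q + 2 * ω a q * σ b c q := by
  simp only [metrisabilityDefect, covU2, projChange, hμ, add_mul, Finset.sum_add_distrib, ite_mul,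
    zero_mul, Finset.sum_ite_eq, Finset.mem_univ, if_true, eq_comm (a := a)]
  simp only [hσ _ c, mul_comm (σ _ _ q)]
  split_ifs <;> ring

lemma pd_eq_of_covU2_eq_zero (hskew : ∀ a b, ε a b q = -ε b a q) {a : Fin 2}
    (h : covU2 Γ ε a 0 1 q = 0) : pd a (ε 0 1) q = -(∑ c, Γ c a c q) * ε 0 1 q := by
  have h00 := hskew 0 0
  have h11 := hskew 1 1
  simp only [covU2, Fin.sum_univ_two] at h ⊢
  linear_combination h - Γ 1 a 0 q / 2 * h00 - Γ 0 a 1 q / 2 * h11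

lemma pd_det_matrixAt (hS : ∀ b c, DifferentiableAt ℝ (S b c) q) {a : Fin 2} {l : ℝ}
    (h : ∀ b c, covU2 Γ S a b c q = l * S b c q) :
    pd a (fun r => (matrixAt S r).det) q =
      2 * (l - ∑ c, Γ c a c q) * (matrixAt S q).det := by
  simp only [covU2, Fin.sum_univ_two] at h
  simp only [Matrix.det_fin_two, matrixAt, Matrix.of_apply, Fin.sum_univ_two]
  rw [pd_sub ((hS 0 0).fun_mul (hS 1 1)) ((hS 0 1).fun_mul (hS 1 0)), pd_mul (hS 0 0) (hS 1 1),
    pd_mul (hS 0 1) (hS 1 0)]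
  linear_combination S 1 1 q * h 0 0 + S 0 0 q * h 1 1 - S 1 0 q * h 0 1 - S 0 1 q * h 1 0

/-- The change of connection enters through the trace `Σ_c (δ^c_aω_c + δ^c_cω_a) = 3ω_a`. -/
lemma pd_relDet (hS : ∀ b c, DifferentiableAt ℝ (S b c) q) (he : DifferentiableAt ℝ e q)
    (he0 : e q ≠ 0) {a : Fin 2} (hpar : pd a e q = -(∑ c, Γ c a c q) * e q) {l : ℝ}
    (h : ∀ b c, covU2 (projChange Γ ω) S a b c q = l * S b c q) :
    pd a (relDet e S) q = (2 * l - 6 * ω a q) * relDet e S q := by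
  have htrace : ∑ c, projChange Γ ω c a c q = ∑ c, Γ c a c q + 3 * ω a q := by
    simp only [projChange, Finset.sum_add_distrib, Finset.sum_ite_eq', Finset.mem_univ, if_true,
      Finset.sum_const, Finset.card_univ, Fintype.card_fin, nsmul_eq_mul, Nat.cast_ofNat]
    ring
  have hdet : DifferentiableAt ℝ (fun r => (matrixAt S r).det) q := by
    simp only [Matrix.det_fin_two, matrixAt, Matrix.of_apply]
    exact ((hS 0 0).fun_mul (hS 1 1)).fun_sub ((hS 0 1).fun_mul (hS 1 0))
  unfold relDet
  rw [pd_div hdet (he.fun_pow 2) (pow_ne_zero 2 he0), pd_comp (hasDerivAt_pow 2 _) he, hpar,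
    pd_det_matrixAt hS h, htrace]
  field_simp
  ring

lemma projEquivLeviCivita_iff_exists_covD2_eq_zero (hΓsym : ∀ c a b, Γ c a b = Γ c b a) :
    ProjEquivLeviCivita U Γ ↔ ∃ ω : Fin 2 → ℝ × ℝ → ℝ, (∀ a, ContDiffOn ℝ (⊤ : ℕ∞) (ω a) U) ∧
      ∃ g, IsMetricOn U g ∧ ∀ q ∈ U, ∀ a b c, covD2 (projChange Γ ω) g a b c q = 0 := by
  have hsymm : ∀ {ω q} c a b, projChange Γ ω c a b q = projChange Γ ω c b a q :=
    projChange_symm fun c a b => congrFun (hΓsym c a b) _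
  refine exists_congr fun ω => and_congr_right fun _ => ⟨?_, ?_⟩
  · rintro ⟨E, F, G, hE, hF, hG, hdet, hC⟩
    have hg := isMetricOn_gmat hE hF hG hdet
    exact ⟨_, hg, fun q hq => (eq_christoffel_iff_covD2_eq_zero (hg.det_ne_zero q hq) hsymm).1
      fun c a b => hC c a b q hq⟩
  · rintro ⟨g, hg, hpar⟩
    have hdet : ∀ q ∈ U, (gmat (g 0 0) (g 0 1) (g 1 1) q).det ≠ 0 := fun q hq => by
      rw [← hg.gmat_eq] at hg
      exact hg.det_ne_zero q hq
    refine ⟨g 0 0, g 0 1, g 1 1, hg.contDiffOn 0 0, hg.contDiffOn 0 1, hg.contDiffOn 1 1,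
      fun q hq => ?_, fun c a b q hq =>
      (eq_christoffel_iff_covD2_eq_zero (hdet q hq) hsymm).2 ?_ c a b⟩
    · simpa [gmat, Matrix.det_fin_two, sq] using hdet q hq
    · simpa only [hg.gmat_eq] using hpar q hq

lemma projEquivLeviCivita_iff_exists_covU2_eq_zero (hU : IsOpen U)
    (hΓsym : ∀ c a b, Γ c a b = Γ c b a) :
    ProjEquivLeviCivita U Γ ↔ ∃ ω : Fin 2 → ℝ × ℝ → ℝ, (∀ a, ContDiffOn ℝ (⊤ : ℕ∞) (ω a) U) ∧
      ∃ S, IsMetricOn U S ∧ ∀ q ∈ U, ∀ a b c, covU2 (projChange Γ ω) S a b c q = 0 := by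
  have hparallel : ∀ {ω g S}, IsMetricOn U g → IsMetricOn U S →
      (∀ q ∈ U, matrixAt g q * matrixAt S q = 1) → ∀ q ∈ U,
      ((∀ a b c, covD2 (projChange Γ ω) g a b c q = 0) ↔
        ∀ a b c, covU2 (projChange Γ ω) S a b c q = 0) := fun hg hS h q hq =>
    forall_congr' fun a => covD2_eq_zero_iff_covU2_eq_zero (hg.differentiableAt hU hq)
      (hS.differentiableAt hU hq) ((hU.eventually_mem hq).mono h) a
  rw [projEquivLeviCivita_iff_exists_covD2_eq_zero hΓsym]
  refine exists_congr fun ω => and_congr_right fun _ => ⟨?_, ?_⟩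
  · rintro ⟨g, hg, hpar⟩
    exact ⟨_, hg.inv, fun q hq => (hparallel hg hg.inv
      (fun r hr => Matrix.mul_nonsing_inv _ (hg.det_ne_zero r hr).isUnit) q hq).1 (hpar q hq)⟩
  · rintro ⟨S, hS, hpar⟩
    exact ⟨_, hS.inv, fun q hq => (hparallel hS.inv hS
      (fun r hr => Matrix.nonsing_inv_mul _ (hS.det_ne_zero r hr).isUnit) q hq).2 (hpar q hq)⟩

lemma exists_rescaling_of_parallel (hU : IsOpen U) (he : ContDiffOn ℝ (⊤ : ℕ∞) e U)
    (he0 : ∀ q ∈ U, e q ≠ 0) (hpar : ∀ a, ∀ q ∈ U, pd a e q = -(∑ c, Γ c a c q) * e q)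
    (hS : IsMetricOn U S) (hparS : ∀ q ∈ U, ∀ a b c, covU2 (projChange Γ ω) S a b c q = 0) :
    ∃ f : ℝ × ℝ → ℝ, ContDiffOn ℝ (⊤ : ℕ∞) f U ∧ (∀ q ∈ U, f q ≠ 0) ∧
      ∀ q ∈ U, ∀ a, pd a f q = 2 * ω a q * f q := by
  have hu := hS.contDiffOn_relDet he he0
  have hu0 := hS.relDet_ne_zero he0
  -- `f = |u|^{-1/3}` for `u = relDet e S`, since `∂_a u = -6ω_a u`.
  refine ⟨fun q => Real.exp (-1 / 3 * Real.log (relDet e S q)),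
    (contDiffOn_const.mul (hu.log hu0)).exp, fun q _ => (Real.exp_pos _).ne', fun q hq a => ?_⟩
  rw [pd_exp_mul_log (differentiableAt_of_contDiffOn hu hU hq) (hu0 q hq),
    pd_relDet (hS.differentiableAt hU hq) (differentiableAt_of_contDiffOn he hU hq) (he0 q hq)
      (hpar a q hq) (l := 0) fun b c => (hparS q hq a b c).trans (zero_mul _).symm,
    mul_div_cancel_right₀ _ (hu0 q hq)]
  ring

/-- With `μ = -σω`, the pair `(σ, μ)` solves the metrisability equation if and only if
`∇_aσ = 2ω_aσ` for the changed connection, so only a rescaling separates `σ` from a parallel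
tensor. -/
theorem projEquivLeviCivita_iff_exists_metrisabilityDefect_eq_zero (hU : IsOpen U)
    (hΓsym : ∀ c a b, Γ c a b = Γ c b a) (he : ContDiffOn ℝ (⊤ : ℕ∞) e U)
    (he0 : ∀ q ∈ U, e q ≠ 0)
    (hpar : ∀ a, ∀ q ∈ U, pd a e q = -(∑ c, Γ c a c q) * e q) :
    ProjEquivLeviCivita U Γ ↔
      ∃ σ μ, IsMetricOn U σ ∧ (∀ b, ContDiffOn ℝ (⊤ : ℕ∞) (μ b) U) ∧
        ∀ q ∈ U, ∀ a b c, metrisabilityDefect Γ σ μ a b c q = 0 := by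
  rw [projEquivLeviCivita_iff_exists_covU2_eq_zero hU hΓsym]
  constructor
  · rintro ⟨ω, hω, S, hS, hparS⟩
    obtain ⟨f, hf, hf0, hpdf⟩ := exists_rescaling_of_parallel hU he he0 hpar hS hparS
    have hσ := hS.mul hf hf0
    set μ : Fin 2 → ℝ × ℝ → ℝ := fun b q => -∑ c, f q * S b c q * ω c q
    refine ⟨_, μ, hσ,
      fun b => (ContDiffOn.sum fun c _ => (hσ.contDiffOn b c).mul (hω c)).neg,
      fun q hq a b c => ?_⟩
    have hcov := covU2_mul (Γ := projChange Γ ω) (differentiableAt_of_contDiffOn hf hU hq)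
      (hS.differentiableAt hU hq b c) a
    rw [covU2_projChange (μ := μ) (fun b c => congrFun (hσ.symm b c) q) fun _ => rfl, hparS q hq,
      hpdf q hq] at hcov
    linear_combination hcov
  · rintro ⟨σ, μ, hσ, hμ, h⟩
    set ω : Fin 2 → ℝ × ℝ → ℝ := fun a q => -∑ b, (matrixAt σ q)⁻¹ a b * μ b q with hω
    have hμω : ∀ q ∈ U, ∀ b, μ b q = -∑ c, σ b c q * ω c q := fun q hq b => by
      have hinv := (eq_inv_mulVec_iff (hσ.det_ne_zero q hq).isUnit).1
        (rfl : _ = (matrixAt σ q)⁻¹ *ᵥ fun b => μ b q)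
      simp only [hω, mul_neg, Finset.sum_neg_distrib, neg_neg]
      exact (congrFun hinv b).symm
    have hcov : ∀ q ∈ U, ∀ a b c, covU2 (projChange Γ ω) σ a b c q = 2 * ω a q * σ b c q :=
      fun q hq a b c => by
        rw [covU2_projChange (fun b c => congrFun (hσ.symm b c) q) (hμω q hq), h q hq, zero_add]
    have hu := hσ.contDiffOn_relDet he he0
    refine ⟨ω, fun a => (ContDiffOn.sum fun b _ => (hσ.inv.contDiffOn a b).mul (hμ b)).neg, _,
      hσ.mul hu (hσ.relDet_ne_zero he0), fun q hq a b c => ?_⟩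
    have hdσ := hσ.differentiableAt hU hq
    rw [covU2_mul (differentiableAt_of_contDiffOn hu hU hq) (hdσ b c),
      pd_relDet hdσ (differentiableAt_of_contDiffOn he hU hq) (he0 q hq) (hpar a q hq)
        (hcov q hq a), hcov q hq]
    ring

end ProjectiveChange

end

/-- **Prolongation theorem for metrisability.** `∇` is projectively equivalent to a
Levi–Civita connection iff there are tensors `(σ^{ab}, μ^a, ρ)` with `σ` symmetric and
nondegenerate solving the closed linear system of the prolonged metrisability equations. -/
theorem prolongation_metrisability (U : Set (ℝ × ℝ)) (hU : IsOpen U)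
    (Γ : Fin 2 → Fin 2 → Fin 2 → ℝ × ℝ → ℝ)
    (hΓsym : ∀ c a b, Γ c a b = Γ c b a)
    (hΓsm : ∀ c a b, ContDiffOn ℝ (⊤ : ℕ∞) (Γ c a b) U)
    (ε : Fin 2 → Fin 2 → ℝ × ℝ → ℝ)
    (hεskew : ∀ a b q, ε a b q = -ε b a q)
    (hεne : ∀ q ∈ U, ε 0 1 q ≠ 0)
    (hεsm : ∀ a b, ContDiffOn ℝ (⊤ : ℕ∞) (ε a b) U)
    (hεpar : ∀ a b c : Fin 2, ∀ q ∈ U,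
      pd a (ε b c) q + (∑ e : Fin 2, Γ b a e q * ε e c q)
        + (∑ e : Fin 2, Γ c a e q * ε b e q) = 0)
    (P : Fin 2 → Fin 2 → ℝ × ℝ → ℝ)
    (hPsym : ∀ a b, P a b = P b a)
    (hPsm : ∀ a b, ContDiffOn ℝ (⊤ : ℕ∞) (P a b) U)
    (hSchouten : ∀ c a b d : Fin 2, ∀ q ∈ U,
      Rcurv Γ c a b d q
        = (if c = a then P b d q else 0) - (if c = b then P a d q else 0)) :
    ProjEquivLeviCivita U Γ ↔
      ∃ σ : Fin 2 → Fin 2 → ℝ × ℝ → ℝ, ∃ μ : Fin 2 → ℝ × ℝ → ℝ, ∃ ρ : ℝ × ℝ → ℝ,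
        (∀ a b, σ a b = σ b a) ∧
        (∀ a b, ContDiffOn ℝ (⊤ : ℕ∞) (σ a b) U) ∧
        (∀ a, ContDiffOn ℝ (⊤ : ℕ∞) (μ a) U) ∧
        ContDiffOn ℝ (⊤ : ℕ∞) ρ U ∧
        (∀ q ∈ U, σ 0 0 q * σ 1 1 q - σ 0 1 q * σ 1 0 q ≠ 0) ∧
        (∀ a b c : Fin 2, ∀ q ∈ U,
          pd a (σ b c) q + (∑ e : Fin 2, Γ b a e q * σ e c q)
              + (∑ e : Fin 2, Γ c a e q * σ b e q)
            - (if a = b then μ c q else 0) - (if a = c then μ b q else 0) = 0) ∧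
        (∀ a b : Fin 2, ∀ q ∈ U,
          pd a (μ b) q + (∑ e : Fin 2, Γ b a e q * μ e q)
            - (if a = b then ρ q else 0)
            + (∑ c : Fin 2, P a c q * σ b c q) = 0) ∧
        (∀ a : Fin 2, ∀ q ∈ U,
          pd a ρ q + 2 * (∑ b : Fin 2, P a b q * μ b q)
            - 2 * (∑ b : Fin 2, ∑ c : Fin 2,
                (1/2) * (covD2 Γ P a b c q - covD2 Γ P b a c q) * σ b c q) = 0) := by
  rw [projEquivLeviCivita_iff_exists_metrisabilityDefect_eq_zero hU hΓsym (hεsm 0 1) hεne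
    fun a q hq => pd_eq_of_covU2_eq_zero (hεskew · · q) (hεpar a 0 1 q hq)]
  constructor
  · rintro ⟨σ, μ, hσ, hμ, h⟩
    have hprol := fun {q} (hq : q ∈ U) => prolonged_system_of_metrisabilityDefect_eq_zero hU hΓsym
      hΓsm hPsym hPsm (fun r hr c a b d => hSchouten c a b d r hr) hσ.symm hσ.contDiffOn hμ h hq
    exact ⟨σ, μ, prolongedRho Γ P σ μ, hσ.symm, hσ.contDiffOn, hμ,
      contDiffOn_prolongedRho hU hΓsm hPsm hσ.contDiffOn hμ,
      fun q hq => by simpa [matrixAt, Matrix.det_fin_two] using hσ.det_ne_zero q hq,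
      fun a b c q hq => h q hq a b c, fun a b q hq => (hprol hq).1 a b,
      fun a q hq => (hprol hq).2 a⟩
  · rintro ⟨σ, μ, ρ, hσsym, hσsm, hμsm, -, hdet, h, -, -⟩
    exact ⟨σ, μ, ⟨hσsym, hσsm, fun q hq => by simpa [matrixAt, Matrix.det_fin_two] using hdet q hq⟩,
      hμsm, fun q hq a b c => h a b c q hq⟩
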